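/- Let M ∈ ℕ with M ≥ 1, let k ∈ ℕ with 1 ≤ k ≤ M, and let f : ℝ^M → ℝ be continuous and permutation invariant. Then f has a continuous k-ary Janossy representation via ℝ^M: there exist a continuous function Φ : ℝ^k → ℝ^M and a continuous function ρ : ℝ^M → ℝ such that f(x₁, …, x_M) = ρ( ((M−k)!/M!) · ∑ Φ(x_{i₁}, …, x_{i_k}) ), where the sum ranges over all ordered k-tuples (i₁, …, i_k) of pairwise distinct indices in {1, …, M}. -/

import Mathlib

/-! By symmetry, the average of `Φ (x_{i₁}, …, x_{i_k})` over all `k`-tuples is the plain average of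
`φ (x_i)` as soon as `Φ` only looks at one of its arguments, `Φ y = φ (y_j)`. Taking for `φ` the
moment curve `t ↦ (t, t², …, t^M)` makes this average the vector `P x` of the first `M` power means.
By Newton's identities `P x` determines `x` up to a permutation, so `f` is constant on the fibres
of `P`. Since `P` is also proper, it is a quotient map onto its closed image; hence `f` descends to
a continuous function there, which Tietze's theorem extends to the whole latent space. -/

open scoped BigOperators

section PowerSums

variable {ι R : Type*} [Fintype ι] [CommRing R] [IsDomain R] [CharZero R] {x y : ι → R}

theorem aeval_esymm_eq_of_aeval_psum_eq {N : ℕ}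
    (h : ∀ m, 0 < m → m ≤ N →
      MvPolynomial.aeval x (MvPolynomial.psum ι R m) =
        MvPolynomial.aeval y (MvPolynomial.psum ι R m))
    {n : ℕ} (hn : n ≤ N) :
    MvPolynomial.aeval x (MvPolynomial.esymm ι R n) =
      MvPolynomial.aeval y (MvPolynomial.esymm ι R n) := by
  induction n using Nat.strong_induction_on with
  | _ n ih =>
    obtain rfl | hpos := n.eq_zero_or_pos
    · simp
    refine mul_left_cancel₀ (Nat.cast_ne_zero.2 hpos.ne' : (n : R) ≠ 0) ?_
    have newton (z : ι → R) := congr(MvPolynomial.aeval z $(MvPolynomial.mul_esymm_eq_sum ι R n))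
    simp only [map_mul, map_sum, map_pow, map_neg, map_one, map_natCast] at newton
    rw [newton x, newton y]
    congr 1
    refine Finset.sum_congr rfl fun a ha => ?_
    obtain ⟨hsum, hlt⟩ := Finset.mem_filter.1 ha
    rw [Finset.HasAntidiagonal.mem_antidiagonal] at hsum
    rw [ih a.1 hlt (by lia), h a.2 (by lia) (by lia)]

theorem map_univ_eq_of_sum_pow_eq
    (h : ∀ m, 0 < m → m ≤ Fintype.card ι → ∑ i, x i ^ m = ∑ i, y i ^ m) :
    Finset.univ.val.map x = Finset.univ.val.map y := by
  have esymm_eq {n : ℕ} (hn : n ≤ Fintype.card ι) :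
      (Finset.univ.val.map x).esymm n = (Finset.univ.val.map y).esymm n := by
    simp only [← MvPolynomial.aeval_esymm_eq_multiset_esymm ι R]
    exact aeval_esymm_eq_of_aeval_psum_eq
      (fun m hpos hm => by simpa [MvPolynomial.psum] using h m hpos hm) hn
  rw [← Polynomial.roots_multiset_prod_X_sub_C (Finset.univ.val.map x),
    ← Polynomial.roots_multiset_prod_X_sub_C (Finset.univ.val.map y),
    Multiset.prod_X_sub_X_eq_sum_esymm, Multiset.prod_X_sub_X_eq_sum_esymm]
  simp only [Multiset.card_map, Finset.card_val, Finset.card_univ]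
  congr 1
  refine Finset.sum_congr rfl fun n hn => ?_
  rw [esymm_eq (Nat.lt_succ_iff.1 (Finset.mem_range.1 hn))]

end PowerSums

theorem exists_perm_comp_eq_of_map_univ_eq {ι α : Type*} [Fintype ι] {x y : ι → α}
    (h : Finset.univ.val.map x = Finset.univ.val.map y) : ∃ σ : Equiv.Perm ι, y ∘ σ = x := by
  classical
  have card_fiber (a : α) : Fintype.card {i // x i = a} = Fintype.card {i // y i = a} := by
    simpa [Multiset.count_map, Fintype.card_subtype, Finset.card_def, eq_comm] using
      congrArg (Multiset.count a) h
  let fiberEquiv (a : α) := Fintype.equivOfCardEq (card_fiber a)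
  exact ⟨Equiv.ofFiberEquiv fiberEquiv, funext (Equiv.ofFiberEquiv_map fiberEquiv)⟩

theorem expect_embedding_apply {ι κ A : Type*} [Fintype ι] [Fintype κ] [Nonempty (κ ↪ ι)]
    [AddCommMonoid A] [Module ℚ≥0 A] (j : κ) (g : ι → A) :
    𝔼 e : κ ↪ ι, g (e j) = 𝔼 i, g i := by
  have : Nonempty ι := ‹Nonempty (κ ↪ ι)›.map (· j)
  -- Any group structure on `ι` will do: its translations act transitively on `ι`.
  let := (Fintype.equivFin ι).addGroup
  calc 𝔼 e : κ ↪ ι, g (e j)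
      = 𝔼 a : ι, 𝔼 e : κ ↪ ι, g (e j + a) := by
        rw [← Fintype.expect_const (ι := ι) (𝔼 e : κ ↪ ι, g (e j))]
        exact Finset.expect_congr rfl fun a _ => (Fintype.expect_equiv
          ((Equiv.refl κ).embeddingCongr (Equiv.addRight a)) _ _ fun _ => rfl).symm
    _ = 𝔼 e : κ ↪ ι, 𝔼 a : ι, g (e j + a) := Finset.expect_comm ..
    _ = 𝔼 _e : κ ↪ ι, 𝔼 i, g i := Finset.expect_congr rfl fun e _ =>
        Fintype.expect_equiv (Equiv.addLeft (e j)) _ _ fun _ => rfl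
    _ = 𝔼 i, g i := Fintype.expect_const _

theorem factorial_div_smul_sum_embedding {M k : ℕ} (hkM : k ≤ M) {E : Type*} [AddCommMonoid E]
    [Module ℝ E] [Module ℚ≥0 E] (v : (Fin k ↪ Fin M) → E) :
    (((M - k).factorial : ℝ) / (M.factorial : ℝ)) • ∑ e, v e = 𝔼 e, v e := by
  have card_eq : ((M - k).factorial : ℝ) * M.descFactorial k = M.factorial := by
    exact_mod_cast Nat.factorial_mul_descFactorial hkM
  rw [← Fintype.card_smul_expect v, ← Nat.cast_smul_eq_nsmul ℝ, smul_smul,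
    Fintype.card_embedding_eq, Fintype.card_fin, Fintype.card_fin, div_mul_eq_mul_div, card_eq,
    div_self (Nat.cast_ne_zero.2 M.factorial_ne_zero), one_smul]

section Factorization

theorem isProperMap_of_norm_le_comp {E F : Type*} [SeminormedAddCommGroup E] [ProperSpace E]
    [TopologicalSpace F] [T2Space F] [CompactlyCoherentSpace F] {P : E → F} (hP : Continuous P)
    {b : F → ℝ} (hb : Continuous b) (h : ∀ x, ‖x‖ ≤ b (P x)) : IsProperMap P := by
  refine isProperMap_iff_isCompact_preimage.2 ⟨hP, fun K hK => ?_⟩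
  obtain ⟨C, hC⟩ := hK.bddAbove_image hb.continuousOn
  refine Metric.isCompact_of_isClosed_isBounded (hK.isClosed.preimage hP) ?_
  exact isBounded_iff_forall_norm_le.2
    ⟨C, fun x hx => (h x).trans (hC (Set.mem_image_of_mem b hx))⟩

universe u v w

theorem exists_continuous_comp_eq_of_isClosedMap {X : Type u} {Z : Type v} {Y : Type w}
    [TopologicalSpace X] [TopologicalSpace Z] [NormalSpace Z] [TopologicalSpace Y]
    [TietzeExtension.{v, w} Y] {P : X → Z} (hP : Continuous P) (hP' : IsClosedMap P)
    {f : X → Y} (hf : Continuous f) (hfP : f.FactorsThrough P) :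
    ∃ ρ : Z → Y, Continuous ρ ∧ ρ ∘ P = f := by
  let q : C(X, Set.range P) := ⟨Set.rangeFactorization P, hP.subtype_mk _⟩
  have hq : Topology.IsQuotientMap q :=
    (hP'.codRestrict _).isQuotientMap q.continuous Set.rangeFactorization_surjective
  have hfq : Function.FactorsThrough (⟨f, hf⟩ : C(X, Y)) q :=
    fun _ _ hxy => hfP (congrArg Subtype.val hxy)
  obtain ⟨ρ, hρ⟩ := ContinuousMap.exists_restrict_eq hP'.isClosed_range (hq.lift _ hfq)
  refine ⟨ρ, ρ.continuous, funext fun x => ?_⟩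
  exact (DFunLike.congr_fun hρ (q x)).trans (DFunLike.congr_fun (hq.lift_comp _ hfq) x)

end Factorization

section PowerMeans

variable {ι : Type*} [Fintype ι] {n : ℕ}

/-- The moment curve `t ↦ (t, t², …, tⁿ)`. Exponents are shifted by one because `Fin n` starts at
zero. -/
def momentCurve (n : ℕ) (t : ℝ) : Fin n → ℝ := fun p => t ^ (p.1 + 1)

/-- The power means `(1 / |ι|) ∑ i, x i ^ m` of orders `m = 1, …, n` of a finite family of reals,
without taking `m`-th roots. They are encoded as the average of the points `x i` of the
moment curve. -/
noncomputable def powerMeans (n : ℕ) (x : ι → ℝ) : Fin n → ℝ := 𝔼 i, momentCurve n (x i)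

theorem continuous_momentCurve : Continuous (momentCurve n) := by
  unfold momentCurve
  fun_prop

theorem powerMeans_apply (x : ι → ℝ) (p : Fin n) :
    powerMeans n x p = (∑ i, x i ^ (p.1 + 1)) / Fintype.card ι := by
  simp [powerMeans, momentCurve, Finset.expect_apply, Fintype.expect_eq_sum_div_card]

theorem continuous_powerMeans : Continuous (powerMeans n : (ι → ℝ) → Fin n → ℝ) := by
  refine continuous_pi fun p => ?_
  simp only [powerMeans_apply]
  fun_prop

theorem sum_pow_eq_card_mul_powerMeans (x : ι → ℝ) (p : Fin n) :
    ∑ i, x i ^ (p.1 + 1) = Fintype.card ι * powerMeans n x p := by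
  obtain _ | _ := isEmpty_or_nonempty ι
  · simp
  · rw [powerMeans_apply, mul_div_cancel₀ _ (Nat.cast_ne_zero.2 Fintype.card_ne_zero)]

theorem exists_perm_comp_eq_of_powerMeans_eq (hn : Fintype.card ι ≤ n) {x y : ι → ℝ}
    (h : powerMeans n x = powerMeans n y) : ∃ σ : Equiv.Perm ι, y ∘ σ = x := by
  refine exists_perm_comp_eq_of_map_univ_eq (map_univ_eq_of_sum_pow_eq fun m hpos hm => ?_)
  obtain ⟨m, rfl⟩ := Nat.exists_eq_add_of_lt hpos
  rw [zero_add] at hm ⊢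
  let p : Fin n := ⟨m, by lia⟩
  rw [sum_pow_eq_card_mul_powerMeans x p, h, ← sum_pow_eq_card_mul_powerMeans y p]

theorem norm_le_card_mul_norm_powerMeans_add_one (hn : Fintype.card ι ≤ n) (x : ι → ℝ) :
    ‖x‖ ≤ Fintype.card ι * ‖powerMeans n x‖ + 1 := by
  refine (pi_norm_le_iff_of_nonneg (by positivity)).2 fun i => ?_
  have abs_sum_le (p : Fin n) : |∑ i, x i ^ (p.1 + 1)| ≤ Fintype.card ι * ‖powerMeans n x‖ := by
    rw [sum_pow_eq_card_mul_powerMeans, abs_mul, Nat.abs_cast]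
    gcongr
    exact norm_le_pi_norm (powerMeans n x) p
  rw [Real.norm_eq_abs]
  -- The second power mean dominates each `x i`, but it is available only when `2 ≤ n`.
  obtain h1 | h1 := le_or_gt (Fintype.card ι) 1
  · have : Subsingleton ι := Fintype.card_le_one_iff_subsingleton.1 h1
    have first := abs_sum_le ⟨0, (Fintype.card_pos_iff.2 ⟨i⟩).trans_le hn⟩
    rw [Fintype.sum_subsingleton _ i, zero_add, pow_one] at first
    linarith
  · have second := (le_abs_self _).trans (abs_sum_le ⟨1, h1.trans_le hn⟩)
    have sq_le : x i ^ 2 ≤ ∑ i, x i ^ 2 :=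
      Finset.single_le_sum (fun j _ => sq_nonneg (x j)) (Finset.mem_univ i)
    refine abs_le_of_sq_le_sq ?_ (by positivity)
    nlinarith [sq_nonneg (Fintype.card ι * ‖powerMeans n x‖)]

theorem isProperMap_powerMeans (hn : Fintype.card ι ≤ n) :
    IsProperMap (powerMeans n : (ι → ℝ) → Fin n → ℝ) :=
  isProperMap_of_norm_le_comp continuous_powerMeans
    (b := fun z => Fintype.card ι * ‖z‖ + 1) (by fun_prop)
    (norm_le_card_mul_norm_powerMeans_add_one hn)

end PowerMeans

theorem continuous_kary_janossy_representation_general {ι κ : Type*} [Fintype ι] [Fintype κ]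
    [Nonempty κ] [Nonempty (κ ↪ ι)] {n : ℕ} (hn : Fintype.card ι ≤ n)
    (Y : Type*) [TopologicalSpace Y] [TietzeExtension.{0} Y] :
    ∃ Φ : (κ → ℝ) → (Fin n → ℝ), Continuous Φ ∧
      ∀ f : (ι → ℝ) → Y, Continuous f → (∀ (π : Equiv.Perm ι) (x : ι → ℝ), f (x ∘ π) = f x) →
        ∃ ρ : (Fin n → ℝ) → Y, Continuous ρ ∧
          ∀ x : ι → ℝ, f x = ρ (𝔼 e : κ ↪ ι, Φ (fun j => x (e j))) := by
  obtain ⟨j⟩ := ‹Nonempty κ›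
  refine ⟨fun y => momentCurve n (y j), continuous_momentCurve.comp (continuous_apply j),
    fun f hf hf_inv => ?_⟩
  have hP := isProperMap_powerMeans hn
  have factors : f.FactorsThrough (powerMeans n) := fun x y hxy => by
    obtain ⟨σ, rfl⟩ := exists_perm_comp_eq_of_powerMeans_eq hn hxy
    exact hf_inv σ y
  obtain ⟨ρ, hρ, rfl⟩ :=
    exists_continuous_comp_eq_of_isClosedMap hP.continuous hP.isClosedMap hf factors
  refine ⟨ρ, hρ, fun x => ?_⟩
  rw [expect_embedding_apply j fun i => momentCurve n (x i)]
  rfl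

/-- Every continuous permutation-invariant `f : ℝ^M → ℝ` has a continuous k-ary
Janossy representation via `ℝ^M`: `f(x) = ρ(((M−k)!/M!) • ∑ Φ(x_{i₁},…,x_{i_k}))`,
the sum ranging over all ordered k-tuples of pairwise distinct indices
(i.e. over all injections `Fin k ↪ Fin M`). -/
theorem continuous_kary_janossy_representation (M k : ℕ) (hM : 1 ≤ M)
    (hk : 1 ≤ k) (hkM : k ≤ M)
    (f : (Fin M → ℝ) → ℝ) (hf_cont : Continuous f)
    (hf_inv : ∀ (π : Equiv.Perm (Fin M)) (x : Fin M → ℝ), f (x ∘ π) = f x) :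
    ∃ (Φ : (Fin k → ℝ) → (Fin M → ℝ)) (ρ : (Fin M → ℝ) → ℝ),
      Continuous Φ ∧ Continuous ρ ∧
        ∀ x : Fin M → ℝ,
          f x = ρ ((((M - k).factorial : ℝ) / (M.factorial : ℝ)) •
            ∑ e : Fin k ↪ Fin M, Φ (fun j => x (e j))) := by
  have : Nonempty (Fin k) := ⟨⟨0, hk⟩⟩
  have : Nonempty (Fin k ↪ Fin M) := ⟨Fin.castLEEmb hkM⟩
  obtain ⟨Φ, hΦ, hrep⟩ := continuous_kary_janossy_representation_general
    (ι := Fin M) (κ := Fin k) (Fintype.card_fin M).le ℝ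
  obtain ⟨ρ, hρ, hfρ⟩ := hrep f hf_cont hf_inv
  exact ⟨Φ, ρ, hΦ, hρ, fun x => by rw [factorial_div_smul_sum_embedding hkM, hfρ x]⟩
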